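/- Let X be a compact Hausdorff metric space of covering dimension ≤ 2(k' − k) − 1 where k' > k ≥ 1 are integers. Let 𝒲 be an open cover of X, and for each W ∈ 𝒲 let p_W : W → M_n(ℂ) be a continuous projection-valued map with rank p_W(x) ≥ k' for all x ∈ W. Then there exists a continuous projection-valued map p : X → M_n(ℂ) such that for all x ∈ X: rank p(x) ≥ k and p(x) ≤ ⋁{p_W(x) : W ∈ 𝒲, x ∈ W}. -/

import Mathlib

/-- `X` has Lebesgue covering dimension at most `d`: every open cover admits an
open refinement in which each point lies in at most `d + 1` sets. -/
def CoveringDimLE (X : Type*) [TopologicalSpace X] (d : ℕ) : Prop :=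
  ∀ U : Set (Set X), (∀ u ∈ U, IsOpen u) → ⋃₀ U = Set.univ →
    ∃ V : Set (Set X), (∀ v ∈ V, IsOpen v) ∧ ⋃₀ V = Set.univ ∧
      (∀ v ∈ V, ∃ u ∈ U, v ⊆ u) ∧
      ∀ x : X, {v ∈ V | x ∈ v}.Finite ∧ {v ∈ V | x ∈ v}.ncard ≤ d + 1

/-- Columns are linearly independent. -/
def ColInj {k m : ℕ} (B : Fin k → Fin m → ℂ) : Prop :=
  ∀ v : Fin k → ℂ, ∑ c, v c • B c = 0 → v = 0

lemma bad_dense {ι : Type*} (k0 m r : ℕ) (hr : r + 2 * k0 < 2 * m)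
    (A : ι → Fin (k0+1) → Fin m → ℂ) (s : Finset ι) :
    Dense {B : Fin (k0+1) → Fin m → ℂ | ∀ J ⊆ s, J.card ≤ r → ∀ t : ι → ℝ,
      ColInj (B + ∑ j ∈ J, t j • A j)} := by
  classical
  let I := {J : Finset ι // J ∈ s.powerset ∧ J.card ≤ r}
  have : Finite I := by
    apply Set.Finite.to_subtype
    exact (Finset.finite_toSet s.powerset).subset fun J hJ => hJ.1
  let g : (q : I × Fin (k0+1)) → ((Fin k0 → Fin m → ℂ) × (Fin k0 → ℂ) × (q.1.1 → ℝ)) →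
      (Fin (k0+1) → Fin m → ℂ) := fun q z =>
    q.2.insertNth (α := fun _ => Fin m → ℂ) (∑ d, z.2.1 d • z.1 d) z.1
      - ∑ j : q.1.1, z.2.2 j • A j
  have hg : ∀ q, ContDiff ℝ 1 (g q) := by
    intro q
    apply ContDiff.sub
    · rw [contDiff_pi]
      intro c
      rcases Fin.eq_self_or_eq_succAbove q.2 c with h | ⟨d, h⟩
      · rw [h]
        simp only [Fin.insertNth_apply_same]
        apply ContDiff.sum
        intro d _
        rw [contDiff_pi]
        intro i
        simp only [Pi.smul_apply, smul_eq_mul]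
        fun_prop
      · rw [h]
        simp only [Fin.insertNth_apply_succAbove]
        fun_prop
    · fun_prop
  have hsub : (⋃ q, Set.range (g q))ᶜ ⊆ {B : Fin (k0+1) → Fin m → ℂ | ∀ J ⊆ s, J.card ≤ r →
      ∀ t : ι → ℝ, ColInj (B + ∑ j ∈ J, t j • A j)} := by
    intro B hB J hJ hJr t v hv
    by_contra hne
    apply hB
    obtain ⟨l, hl⟩ : ∃ l, v l ≠ 0 := by
      by_contra h; push Not at h; exact hne (funext h)
    set C := B + ∑ j ∈ J, t j • A j with hC
    refine Set.mem_iUnion.2 ⟨(⟨J, Finset.mem_powerset.2 hJ, hJr⟩, l),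
      (fun d => C (l.succAbove d), fun d => -(v l)⁻¹ * v (l.succAbove d), fun j => t j), ?_⟩
    have h1 : l.insertNth (α := fun _ => Fin m → ℂ)
        (∑ d, (-(v l)⁻¹ * v (l.succAbove d)) • C (l.succAbove d))
        (fun d => C (l.succAbove d)) = C := by
      rw [Fin.insertNth_eq_iff]
      refine ⟨?_, rfl⟩
      rw [Fin.sum_univ_succAbove _ l] at hv
      simp only [mul_smul]
      rw [← Finset.smul_sum, eq_neg_of_add_eq_zero_right hv, smul_neg, neg_smul, neg_neg, smul_smul,
        inv_mul_cancel₀ hl, one_smul]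
    simp only [g]
    rw [h1, hC, Finset.sum_coe_sort J (fun j => t j • A j)]
    simp
  refine Dense.mono hsub (dense_compl_of_dimH_lt_finrank ?_)
  rw [dimH_iUnion]
  have hfr : Module.finrank ℝ (Fin (k0+1) → Fin m → ℂ) = (k0+1) * (m * 2) := by
    simp [Module.finrank_pi_fintype]
  refine lt_of_le_of_lt (b := ((k0 * (m*2) + (k0 * 2 + r) : ℕ) : ENNReal)) (iSup_le fun q => ?_) ?_
  · refine (hg q).dimH_range_le.trans ?_
    rw [Nat.cast_le]
    simp [Module.finrank_prod, Module.finrank_pi_fintype]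
    exact q.1.2.2
  · rw [hfr, Nat.cast_lt]; nlinarith

lemma general_position {ι : Type*} (k0 m r : ℕ) (hr : r + 2 * k0 < 2 * m)
    (c : ι → Fin (k0+1) → Fin m → ℂ) (ε : ℝ) (hε : 0 < ε) (s : Finset ι) :
    ∃ A : ι → Fin (k0+1) → Fin m → ℂ, (∀ i, dist (A i) (c i) < ε) ∧
      ∀ J ⊆ s, J.card ≤ r + 1 → ∀ t : ι → ℝ, (∃ j ∈ J, t j ≠ 0) →
        ColInj (∑ j ∈ J, t j • A j) := by
  classical
  induction s using Finset.induction_on with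
  | empty =>
    refine ⟨c, fun i => by simpa using hε, ?_⟩
    rintro J hJ _ t ⟨j, hj, _⟩
    exact absurd (hJ hj) (by simp)
  | insert a s ha ih =>
    obtain ⟨A, hA, hA'⟩ := ih
    obtain ⟨B, hB, hBc⟩ := (bad_dense k0 m r hr A s).exists_dist_lt (c a) hε
    have hup : ∀ J : Finset ι, a ∉ J → ∀ t : ι → ℝ,
        ∑ j ∈ J, t j • Function.update A a B j = ∑ j ∈ J, t j • A j := by
      intro J hJ t
      refine Finset.sum_congr rfl fun j hj => ?_
      rw [Function.update_of_ne (by rintro rfl; exact hJ hj)]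
    refine ⟨Function.update A a B, ?_, ?_⟩
    · intro i
      by_cases h : i = a
      · subst h; simpa [dist_comm] using hBc
      · simpa [h] using hA i
    · rintro J hJ hJr t ht
      by_cases haJ : a ∈ J
      · have hJs : J.erase a ⊆ s := by
          intro j hj
          have := hJ (Finset.mem_of_mem_erase hj)
          rcases Finset.mem_insert.1 this with h | h
          · exact absurd h (Finset.ne_of_mem_erase hj)
          · exact h
        have hcard : (J.erase a).card ≤ r := by
          rw [Finset.card_erase_of_mem haJ]; omega
        rw [← Finset.add_sum_erase _ _ haJ, hup _ (by simp)]
        simp only [Function.update_self]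
        by_cases hta : t a = 0
        · rw [hta, zero_smul, zero_add]
          refine hA' _ hJs (by omega) t ?_
          obtain ⟨j, hj, hjt⟩ := ht
          exact ⟨j, Finset.mem_erase.2 ⟨by rintro rfl; exact hjt hta, hj⟩, hjt⟩
        · have := hB _ hJs hcard (fun j => (t a)⁻¹ * t j)
          intro v hv
          apply this v
          have e : B + ∑ j ∈ J.erase a, ((t a)⁻¹ * t j) • A j =
              (t a)⁻¹ • (t a • B + ∑ j ∈ J.erase a, t j • A j) := by
            rw [smul_add, smul_smul, inv_mul_cancel₀ hta, one_smul, Finset.smul_sum]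
            simp only [smul_smul]
          rw [e]
          simp only [Pi.smul_apply, smul_comm _ (t a)⁻¹]
          rw [← Finset.smul_sum, hv, smul_zero]
      · rw [hup J haJ]
        refine hA' J ?_ hJr t ht
        intro j hj
        rcases Finset.mem_insert.1 (hJ hj) with h | h
        · subst h; exact absurd hj haJ
        · exact h

lemma perturb {X : Type*} [MetricSpace X] [CompactSpace X] (k0 m r : ℕ)
    (hr : r + 2 * k0 < 2 * m) (hdim : CoveringDimLE X r)
    (S : X → Fin (k0+1) → Fin m → ℂ) (hS : Continuous S) (ε : ℝ) (hε : 0 < ε) :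
    ∃ S' : X → Fin (k0+1) → Fin m → ℂ, Continuous S' ∧ (∀ x, dist (S' x) (S x) < ε) ∧
      ∀ x, ColInj (S' x) := by
  classical
  obtain ⟨V, hVo, hVc, hVU, hVr⟩ := hdim (Set.range fun c => S ⁻¹' Metric.ball c (ε/2))
    (by rintro _ ⟨c, rfl⟩; exact Metric.isOpen_ball.preimage hS)
    (by
      refine Set.eq_univ_of_forall fun x => ⟨_, ⟨S x, rfl⟩, ?_⟩
      simpa using hε)
  obtain ⟨F, hFV, hF⟩ := isCompact_univ.elim_finite_subcover (fun v : V => v.1)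
    (fun v => hVo v.1 v.2) (by rw [← Set.sUnion_eq_iUnion, hVc]) |>.imp fun F h => 
      (⟨trivial, h⟩ : True ∧ _)
  choose! c hc using fun v : V => (hVU v.1 v.2)
  have hc' : ∀ v : V, ∃ c, v.1 ⊆ S ⁻¹' Metric.ball c (ε/2) := by
    intro v
    obtain ⟨⟨c', hc'⟩, h⟩ := hc v
    exact ⟨c', by rw [← hc'] at h; exact h⟩
  choose c1 hc1 using hc'
  obtain ⟨A, hA, hA'⟩ := general_position (ι := F) k0 m r hr (fun v => c1 v.1) (ε/2) (by positivity)
    Finset.univ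
  obtain ⟨f, hf⟩ := PartitionOfUnity.exists_isSubordinate isClosed_univ (fun v : F => v.1.1)
    (fun v => hVo _ v.1.2) (by
      intro x hx
      obtain ⟨v, hv⟩ := Set.mem_iUnion.1 (hF hx)
      obtain ⟨hvF, hxv⟩ := Set.mem_iUnion.1 hv
      exact Set.mem_iUnion.2 ⟨⟨v, hvF⟩, hxv⟩)
  have hmem : ∀ x v, f v x ≠ 0 → x ∈ v.1.1 := fun x v h =>
    hf v (subset_closure h)
  have hsum : ∀ x, ∑ v, f v x = 1 := by
    intro x
    rw [← finsum_eq_sum_of_fintype]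
    exact f.sum_eq_one (Set.mem_univ x)
  refine ⟨fun x => ∑ v, f v x • A v, by fun_prop, ?_, ?_⟩
  · intro x
    rw [← Metric.mem_ball]
    beta_reduce
    have : ∑ v, f v x • A v = ∑ v ∈ Finset.univ.filter (fun v => f v x ≠ 0), f v x • A v := by
      rw [Finset.sum_filter_of_ne]
      intro v _ h h0
      exact h (by rw [h0, zero_smul])
    rw [this]
    refine (convex_ball (S x) ε).sum_mem (fun v _ => f.nonneg v x) ?_ ?_
    · rw [Finset.sum_filter_ne_zero, hsum]
    · intro v hv
      have h1 := hc1 v.1 (hmem x v (Finset.mem_filter.1 hv).2)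
      simp only [Set.mem_preimage, Metric.mem_ball] at h1
      have h2 := hA v
      rw [dist_comm] at h1
      have := dist_triangle (A v) (c1 v.1) (S x)
      rw [Metric.mem_ball]
      linarith
  · intro x
    have : ∑ v, f v x • A v = ∑ v ∈ Finset.univ.filter (fun v => f v x ≠ 0), f v x • A v := by
      rw [Finset.sum_filter_of_ne]
      intro v _ h h0
      exact h (by rw [h0, zero_smul])
    simp only [this]
    refine hA' _ (Finset.subset_univ _) ?_ (fun v => f v x) ?_
    · refine le_trans ?_ (hVr x).2
      rw [← Set.ncard_coe_finset]
      refine Set.ncard_le_ncard_of_injOn (fun v : F => v.1.1) ?_ ?_ (hVr x).1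
      · intro v hv
        exact ⟨v.1.2, hmem x v (Finset.mem_filter.1 hv).2⟩
      · intro v _ w _ h
        exact Subtype.ext (Subtype.ext h)
    · by_contra h
      push Not at h
      have := hsum x
      rw [Finset.sum_eq_zero] at this
      · exact zero_ne_one this
      · intro v _
        by_contra h0
        exact h0 (h v (by simp [h0]))

lemma continuousOn_matrix_mul {X : Type*} [TopologicalSpace X] {a b c : ℕ} {s : Set X}
    {f : X → Matrix (Fin a) (Fin b) ℂ} {g : X → Matrix (Fin b) (Fin c) ℂ}
    (hf : ContinuousOn f s) (hg : ContinuousOn g s) : ContinuousOn (fun x => f x * g x) s :=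
  (Continuous.matrix_mul continuous_fst continuous_snd).comp_continuousOn (hf.prodMk hg)

open ComplexOrder in
lemma rank_of_gram {n k : ℕ} (T : Matrix (Fin n) (Fin k) ℂ)
    (h : IsUnit (T.conjTranspose * T).det) : T.rank = k := by
  rw [← Matrix.rank_conjTranspose_mul_self, Matrix.rank_of_isUnit, Fintype.card_fin]
  exact (Matrix.isUnit_iff_isUnit_det _).2 h

open Matrix ComplexOrder in
lemma gram_det_ne_zero_iff {n k : ℕ} (T : Matrix (Fin n) (Fin k) ℂ) :
    (Tᴴ * T).det ≠ 0 ↔ ∀ v, T *ᵥ v = 0 → v = 0 := by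
  rw [Ne, ← Matrix.exists_mulVec_eq_zero_iff]
  simp only [Matrix.conjTranspose_mul_self_mulVec_eq_zero]
  constructor
  · intro h v hv
    by_contra hne
    exact h ⟨v, hne, hv⟩
  · rintro h ⟨v, hne, hv⟩
    exact hne (h v hv)

open Matrix in
lemma local_frame {X : Type*} [MetricSpace X] [CompactSpace X] (n m : ℕ) (W : Set X)
    (hW : IsOpen W) (p : X → Matrix (Fin n) (Fin n) ℂ) (hp : ContinuousOn p W) (x₀ : X)
    (hx₀ : x₀ ∈ W) (hrank : m ≤ (p x₀).rank) :
    ∃ (L : Matrix (Fin m) (Fin n) ℂ) (H : X → Matrix (Fin n) (Fin m) ℂ), Continuous H ∧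
      {x | L * H x = 1} ∈ nhds x₀ ∧
      (∀ x, H x = 0 ∨ (x ∈ W ∧ ∃ R : Matrix (Fin n) (Fin m) ℂ, H x = p x * R)) := by
  obtain ⟨b, hb⟩ := exists_linearIndependent_of_le_finrank (R := ℂ)
    (M := LinearMap.range (p x₀).mulVecLin) hrank
  choose w hw using fun j => (b j).2
  let V : Matrix (Fin n) (Fin m) ℂ := Matrix.of fun i j => w j i
  let P := p x₀ * V
  have hP : (Pᴴ * P).det ≠ 0 := by
    rw [gram_det_ne_zero_iff]
    intro v hv
    have hb' : LinearIndependent ℂ (fun j => (b j : Fin n → ℂ)) :=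
      hb.map' (Submodule.subtype _) (Submodule.ker_subtype _)
    rw [Fintype.linearIndependent_iff] at hb'
    refine funext (hb' v ?_)
    rw [← hv, ← Matrix.mulVec_mulVec]
    have : V *ᵥ v = ∑ j, v j • w j := by
      ext i
      simp [V, Matrix.mulVec, dotProduct, mul_comm]
    rw [this, ← Matrix.mulVecLin_apply, map_sum]
    refine Finset.sum_congr rfl fun j _ => ?_
    rw [map_smul, hw]
  let N : X → Matrix (Fin m) (Fin m) ℂ := fun x => Pᴴ * (p x * V)
  have hN : ContinuousOn N W := by
    apply continuousOn_matrix_mul continuousOn_const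
    exact continuousOn_matrix_mul hp continuousOn_const
  have hNd : ContinuousOn (fun x => (N x).det) W :=
    (Continuous.matrix_det continuous_id).comp_continuousOn hN
  let U := W ∩ (fun x => (N x).det) ⁻¹' {0}ᶜ
  have hU : IsOpen U := hNd.isOpen_inter_preimage hW isOpen_compl_singleton
  have hxU : x₀ ∈ U := ⟨hx₀, hP⟩
  obtain ⟨C, hC, hCc, hCU⟩ : ∃ C ∈ nhds x₀, IsClosed C ∧ C ⊆ U :=
    exists_mem_nhds_isClosed_subset (hU.mem_nhds hxU)
  obtain ⟨χ, hχs, hχ1, -⟩ := exists_tsupport_one_of_isOpen_isClosed hU isClosed_closure.isCompact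
    hCc hCU
  let H : X → Matrix (Fin n) (Fin m) ℂ := fun x => (χ x : ℂ) • (p x * (V * (N x)⁻¹))
  refine ⟨Pᴴ, H, ?_, ?_, ?_⟩
  · have hts : tsupport H ⊆ U := by
      refine (closure_mono ?_).trans hχs
      intro x hx h0
      apply hx
      simp only [H]
      rw [h0]; simp
    refine ContinuousOn.continuous_of_tsupport_subset ?_ hU hts
    have hinv : ContinuousOn (fun x => (N x)⁻¹) U := by
      simp only [Matrix.inv_def, Ring.inverse_eq_inv']
      refine ContinuousOn.smul (f := fun x => (N x).det⁻¹) (g := fun x => (N x).adjugate) ?_ ?_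
      · exact (hNd.mono Set.inter_subset_left).inv₀ (fun x hx => hx.2)
      · exact (Continuous.matrix_adjugate continuous_id).comp_continuousOn
          (hN.mono Set.inter_subset_left)
    refine ContinuousOn.smul (f := fun x => (χ x : ℂ)) (g := fun x => p x * (V * (N x)⁻¹)) ?_ ?_
    · exact (Complex.continuous_ofReal.comp χ.continuous).continuousOn
    · exact continuousOn_matrix_mul (hp.mono Set.inter_subset_left)
        (continuousOn_matrix_mul continuousOn_const hinv)
  · filter_upwards [hC] with x hx
    have h1 : χ x = 1 := hχ1 hx
    have h2 : (N x).det ≠ 0 := (hCU hx).2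
    simp only [H, h1]
    rw [Complex.ofReal_one, one_smul, ← Matrix.mul_assoc, ← Matrix.mul_assoc, Matrix.mul_assoc Pᴴ]
    exact Matrix.mul_nonsing_inv _ (isUnit_iff_ne_zero.2 h2)
  · intro x
    by_cases h : χ x = 0
    · left; simp only [H, h]; simp
    · right
      refine ⟨(hχs (subset_closure h)).1, (χ x : ℂ) • (V * (N x)⁻¹), ?_⟩
      simp only [H]
      rw [Matrix.mul_smul]

open Matrix in
lemma exists_frame {X : Type*} [MetricSpace X] [CompactSpace X] (n k0 m r : ℕ)
    (hr : r + 2 * k0 < 2 * m) (hdim : CoveringDimLE X r)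
    (E : X → Submodule ℂ (Fin n → ℂ))
    (hloc : ∀ x₀, ∃ (L : Matrix (Fin m) (Fin n) ℂ) (H : X → Matrix (Fin n) (Fin m) ℂ),
      Continuous H ∧ {x | L * H x = 1} ∈ nhds x₀ ∧ ∀ x v, H x *ᵥ v ∈ E x) :
    ∃ T : X → Matrix (Fin n) (Fin (k0+1)) ℂ, Continuous T ∧ (∀ x v, T x *ᵥ v ∈ E x) ∧
      ∀ x, ((T x)ᴴ * T x).det ≠ 0 := by
  classical
  choose L H hH hL hE using hloc
  have key : ∀ s : Finset X, ∃ T : X → Matrix (Fin n) (Fin (k0+1)) ℂ, Continuous T ∧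
      (∀ x v, T x *ᵥ v ∈ E x) ∧
      ∀ x ∈ ⋃ a ∈ s, {x | L a * H a x = 1}, ((T x)ᴴ * T x).det ≠ 0 := by
    intro s
    induction s using Finset.induction_on with
    | empty => exact ⟨fun _ => 0, continuous_const, fun x v => by simp, by simp⟩
    | insert a s ha ih =>
      obtain ⟨T, hT, hTE, hTi⟩ := ih
      let O : Set (X × (Fin (k0+1) → Fin m → ℂ)) := {z |
        ((T z.1 + H a z.1 * (Matrix.of z.2)ᵀ)ᴴ * (T z.1 + H a z.1 * (Matrix.of z.2)ᵀ)).det ≠ 0}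
      have hO : IsOpen O := by
        refine isOpen_ne_fun ?_ continuous_const
        have hc : Continuous fun z : X × (Fin (k0+1) → Fin m → ℂ) =>
            T z.1 + H a z.1 * (Matrix.of z.2)ᵀ := by
          refine (hT.comp continuous_fst).add
            (((hH a).comp continuous_fst).matrix_mul ?_)
          exact Continuous.matrix_transpose continuous_snd
        exact (hc.matrix_conjTranspose.matrix_mul hc).matrix_det
      have hK : IsCompact (⋃ a ∈ s, {x | L a * H a x = 1}) := by
        apply IsClosed.isCompact
        apply Set.Finite.isClosed_biUnion s.finite_toSet
        intro a _
        exact isClosed_eq (continuous_const.matrix_mul (hH a)) continuous_const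
      obtain ⟨u, v, hu, hv, hKu, h0v, huv⟩ := generalized_tube_lemma hK
        (isCompact_singleton (x := (0 : Fin (k0+1) → Fin m → ℂ))) hO (by
          rintro ⟨x, y⟩ ⟨hx, hy⟩
          simp only [Set.mem_singleton_iff] at hy
          subst hy
          have : (Matrix.of (0 : Fin (k0+1) → Fin m → ℂ))ᵀ = 0 := rfl
          simp only [O, Set.mem_ofPred_eq, this, Matrix.mul_zero, add_zero]
          exact hTi x hx)
      obtain ⟨ε, hε, hεv⟩ := Metric.isOpen_iff.1 hv 0 (h0v rfl)
      let S : X → Fin (k0+1) → Fin m → ℂ := fun x j i => (L a * T x) i j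
      have hS : Continuous S :=
        Continuous.matrix_transpose (continuous_const.matrix_mul hT)
      obtain ⟨S', hS', hS'd, hS'i⟩ := perturb k0 m r hr hdim _ hS ε hε
      let D : X → Fin (k0+1) → Fin m → ℂ := fun x => S' x - S x
      have hD : Continuous D := hS'.sub hS
      refine ⟨fun x => T x + H a x * (Matrix.of (D x))ᵀ, ?_, ?_, ?_⟩
      · exact hT.add ((hH a).matrix_mul (Continuous.matrix_transpose hD))
      · intro x v
        rw [Matrix.add_mulVec, ← Matrix.mulVec_mulVec]
        exact (E x).add_mem (hTE x v) (hE a x _)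
      · intro x hx
        rw [Finset.set_biUnion_insert] at hx
        rcases hx with hx | hx
        · have hx' : L a * H a x = 1 := hx
          rw [gram_det_ne_zero_iff]
          intro v hv
          have h1 : L a * (T x + H a x * (Matrix.of (D x))ᵀ) = (Matrix.of (S' x))ᵀ := by
            rw [Matrix.mul_add, ← Matrix.mul_assoc, hx', Matrix.one_mul]
            ext i j
            simp [D, S]
          have h2 : (Matrix.of (S' x))ᵀ *ᵥ v = 0 := by
            rw [← h1, ← Matrix.mulVec_mulVec, hv, Matrix.mulVec_zero]
          apply hS'i x v
          rw [← h2]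
          ext i
          simp [Matrix.mulVec, dotProduct, mul_comm]
        · apply huv (show (x, D x) ∈ u ×ˢ v from ⟨hKu hx, hεv ?_⟩)
          rw [Metric.mem_ball, dist_zero_right]
          have := hS'd x
          rw [dist_eq_norm] at this
          exact this
  obtain ⟨s, hs⟩ := CompactSpace.elim_nhds_subcover (fun a => {x | L a * H a x = 1}) hL
  obtain ⟨T, h1, h2, h3⟩ := key s
  exact ⟨T, h1, h2, fun x => h3 x (by rw [hs]; trivial)⟩

/- Selection principle (Dădărlat–Nagy–Némethi–Pasnicu, Proposition 3.2):
given an open cover `W` of a compact metric space `X` of covering dimension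
`≤ 2(k'-k) - 1` and continuous projection-valued maps `pW i` on `W i` of rank
`≥ k'`, there is a global continuous projection-valued map `p` of rank `≥ k`
with `p x` dominated by the join of the `pW i x` (expressed via ranges). -/
theorem selection_principle {X : Type*} [MetricSpace X] [CompactSpace X]
    (k k' n : ℕ) (hk : 1 ≤ k) (hk' : k < k')
    (hdim : CoveringDimLE X (2 * (k' - k) - 1))
    {ι : Type*} (W : ι → Set X) (hWopen : ∀ i, IsOpen (W i))
    (hWcover : ⋃ i, W i = Set.univ)
    (pW : ι → X → Matrix (Fin n) (Fin n) ℂ)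
    (hpWcont : ∀ i, ContinuousOn (pW i) (W i))
    (hpWproj : ∀ i, ∀ x ∈ W i, IsIdempotentElem (pW i x) ∧ IsSelfAdjoint (pW i x))
    (hpWrank : ∀ i, ∀ x ∈ W i, k' ≤ (pW i x).rank) :
    ∃ p : X → Matrix (Fin n) (Fin n) ℂ, Continuous p ∧
      (∀ x, IsIdempotentElem (p x) ∧ IsSelfAdjoint (p x)) ∧
      (∀ x, k ≤ (p x).rank) ∧
      ∀ x, LinearMap.range (Matrix.mulVecLin (p x)) ≤
        ⨆ i ∈ {i | x ∈ W i}, LinearMap.range (Matrix.mulVecLin (pW i x)) := by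
  classical
  obtain ⟨k0, rfl⟩ : ∃ k0, k = k0 + 1 := ⟨k - 1, by omega⟩
  let E : X → Submodule ℂ (Fin n → ℂ) := fun x =>
    ⨆ i ∈ {i | x ∈ W i}, LinearMap.range (Matrix.mulVecLin (pW i x))
  obtain ⟨T, hT, hTE, hTi⟩ := exists_frame n k0 k' (2 * (k' - (k0+1)) - 1) (by omega) hdim E (by
    intro x₀
    have : x₀ ∈ ⋃ i, W i := by rw [hWcover]; trivial
    obtain ⟨i, hi⟩ := Set.mem_iUnion.1 this
    obtain ⟨L, H, hH, hL, hR⟩ := local_frame n k' (W i) (hWopen i) (pW i) (hpWcont i) x₀ hi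
      (hpWrank i x₀ hi)
    refine ⟨L, H, hH, hL, fun x v => ?_⟩
    rcases hR x with h | ⟨hx, R, h⟩
    · rw [h, Matrix.zero_mulVec]; exact Submodule.zero_mem _
    · rw [h, ← Matrix.mulVec_mulVec]
      exact Submodule.mem_iSup_of_mem i (Submodule.mem_iSup_of_mem hx ⟨_, rfl⟩))
  have hu : ∀ x, IsUnit ((T x).conjTranspose * T x).det := fun x => isUnit_iff_ne_zero.2 (hTi x)
  have hG : Continuous fun x => (T x).conjTranspose * T x := hT.matrix_conjTranspose.matrix_mul hT
  let p : X → Matrix (Fin n) (Fin n) ℂ := fun x =>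
    T x * (((T x).conjTranspose * T x)⁻¹ * (T x).conjTranspose)
  have hpT : ∀ x, p x * T x = T x := by
    intro x
    simp only [p]
    rw [Matrix.mul_assoc, Matrix.mul_assoc, Matrix.nonsing_inv_mul _ (hu x), Matrix.mul_one]
  refine ⟨p, ?_, ?_, ?_, ?_⟩
  · refine hT.matrix_mul (Continuous.matrix_mul ?_ hT.matrix_conjTranspose)
    simp only [Matrix.inv_def, Ring.inverse_eq_inv']
    exact (hG.matrix_det.inv₀ hTi).smul hG.matrix_adjugate
  · intro x
    constructor
    · show p x * p x = p x
      conv_lhs => rhs; simp only [p]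
      rw [← Matrix.mul_assoc, hpT]
    · show (p x).conjTranspose = p x
      simp only [p, Matrix.conjTranspose_mul, Matrix.conjTranspose_nonsing_inv,
        Matrix.conjTranspose_conjTranspose, Matrix.mul_assoc]
  · intro x
    have h1 : (T x).rank = k0 + 1 := rank_of_gram _ (hu x)
    calc k0 + 1 = (p x * T x).rank := by rw [hpT, h1]
      _ ≤ (p x).rank := Matrix.rank_mul_le_left _ _
  · rintro x _ ⟨v, rfl⟩
    simp only [p, Matrix.mulVecLin_apply]
    rw [← Matrix.mulVec_mulVec]
    exact hTE x _
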